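/- Let d ≥ 3 be an integer. There exists a constant C > 0 such that for all μ ≥ 2, | Σ_{0 ≤ l ≤ μ−(d−2)/2} (m_l^d − m_{l−1}^d) · ∫_{l+(d−3)/2}^{μ} μ·g(t/μ) dt − 2^{−d} Γ(d/2+1)^{−2} μ^d | ≤ C μ^{d−2}, where the sum is over integers l. -/

import Mathlib

open Real MeasureTheory Set

/-- The Bessel function of the first kind of order `ν ≥ 0`, for `x > 0`, via the
integral representation. -/
noncomputable def besselJ (ν x : ℝ) : ℝ :=
  (1 / π) * (∫ θ in (0:ℝ)..π, Real.cos (x * Real.sin θ - ν * θ)) -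
    (Real.sin (ν * π) / π) * ∫ t in Set.Ioi (0:ℝ), Real.exp (-x * Real.sinh t - ν * t)

/-- The function `g(t) = (√(1-t²) - t arccos t)/π`. -/
noncomputable def gfun (t : ℝ) : ℝ := (Real.sqrt (1 - t ^ 2) - t * Real.arccos t) / π

/-- The multiplicity `m_n^d = C(n+d-1, d-1) - C(n+d-3, d-1)`. -/
def multB (d n : ℕ) : ℕ := Nat.choose (n + d - 1) (d - 1) - Nat.choose (n + d - 3) (d - 1)

/-- The difference `m_l^d - m_{l-1}^d` (with `m_{-1}^d = 0`). -/
def multBdiff (d l : ℕ) : ℤ := (multB d l : ℤ) - if l = 0 then 0 else (multB d (l - 1) : ℤ)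

/-!
Write `k = d - 3` and `s = l + k / 2`. For `k ≠ 0` the weight `m_l - m_{l-1}` equals `2 / k!` times
`s` and a rising factorial whose `k - 1` factors are symmetric about `s`. Pairing opposite factors
removes every odd correction, so the weight is `(2 / k!) s ^ k` up to `O(s ^ (k - 2))`. For `k = 0`
the weights are `1, 2, 2, …`, those of the trapezoidal rule. The area is `μ ^ 2 * gTail (s / μ)`
with `gTail x = ∫ₓ¹ g`, so the sum is `(2 / k!) μ ^ (k + 2)` times a Riemann sum of
`x ^ k * gTail x` with step `1 / μ`. This function is `C²` up to `x = 1` and vanishes there to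
second order, so by the trapezoidal rule the error is two powers of `μ` below the main term,
although the last node misses `1`. Two integrations by parts and `x = cos θ` turn
`∫₀¹ x ^ k * gTail x` into the Wallis integral of `cos ^ (k + 3)`, the source of the Gamma factor.
-/

theorem tsum_ite_natCast_le_eq_sum_range_floor {R M : Type*} [Semiring R] [LinearOrder R]
    [FloorSemiring R] [AddCommMonoid M] [TopologicalSpace M] {x : R} (hx : 0 ≤ x) (f : ℕ → M) :
    (∑' l : ℕ, if (l : R) ≤ x then f l else 0) = ∑ l ∈ Finset.range (⌊x⌋₊ + 1), f l := by
  have le_iff (l : ℕ) : (l : R) ≤ x ↔ l ∈ Finset.range (⌊x⌋₊ + 1) := by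
    rw [← Nat.le_floor_iff hx, Finset.mem_range, Nat.lt_succ_iff]
  simp_rw [le_iff]
  rw [tsum_eq_sum fun l hl ↦ if_neg hl]
  exact Finset.sum_congr rfl fun l hl ↦ if_pos hl

/-! ### Multiplicities -/

theorem multB_add_three (k n : ℕ) :
    multB (k + 3) n = (n + k + 1).choose (k + 1) + (n + k).choose (k + 1) := by
  have pascal : (n + k + 2).choose (k + 2) =
      (n + k + 1).choose (k + 1) + ((n + k).choose (k + 1) + (n + k).choose (k + 2)) := by
    rw [Nat.choose_succ_succ, Nat.choose_succ_succ (n + k) (k + 1)]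
  change (n + k + 2).choose (k + 2) - (n + k).choose (k + 2) = _
  omega

theorem multBdiff_add_three_zero (k : ℕ) : multBdiff (k + 3) 0 = 1 := by
  simp [multBdiff, multB_add_three]

theorem multBdiff_add_three_succ (k l : ℕ) :
    multBdiff (k + 3) (l + 1) = (l + 1 + k).choose k + (l + k).choose k := by
  have pascal₁ := Nat.choose_succ_succ (l + k + 1) k
  have pascal₂ := Nat.choose_succ_succ (l + k) k
  simp only [multBdiff, multB_add_three, Nat.add_eq_zero_iff, one_ne_zero, and_false, if_false,
    Nat.add_sub_cancel, Nat.succ_eq_add_one, Nat.add_right_comm l 1 k] at *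
  omega

theorem ascPochhammer_succ_eval_left {S : Type*} [CommSemiring S] (n : ℕ) (x : S) :
    (ascPochhammer S (n + 1)).eval x = x * (ascPochhammer S n).eval (x + 1) := by
  simp [ascPochhammer_succ_left]

theorem factorial_mul_choose_eq_eval_ascPochhammer (n k : ℕ) :
    (k.factorial : ℝ) * (n + k).choose k = (ascPochhammer ℝ k).eval ((n : ℝ) + 1) := by
  have h := ascPochhammer_nat_eq_natCast_ascFactorial ℝ (n + 1) k
  rw [Nat.ascFactorial_eq_factorial_mul_choose] at h
  exact_mod_cast h.symm

theorem factorial_mul_multBdiff_add_four (m l : ℕ) :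
    ((m + 1).factorial : ℝ) * multBdiff (m + 4) l =
      (2 * l + (m + 1)) * (ascPochhammer ℝ m).eval ((l : ℝ) + 1) := by
  obtain _ | l := l
  · rw [multBdiff_add_three_zero (m + 1), Nat.cast_zero, zero_add, ascPochhammer_eval_one]
    push_cast [Nat.factorial_succ]
    ring
  · have upper := factorial_mul_choose_eq_eval_ascPochhammer (l + 1) (m + 1)
    have lower := factorial_mul_choose_eq_eval_ascPochhammer l (m + 1)
    rw [ascPochhammer_succ_eval] at upper
    rw [ascPochhammer_succ_eval_left] at lower
    rw [multBdiff_add_three_succ (m + 1)]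
    push_cast at upper lower ⊢
    linear_combination upper + lower

-- Peeling off the two outer factors preserves the midpoint `s` of the remaining ones.
theorem ascPochhammer_add_two_eval_sub_half (m : ℕ) (s : ℝ) :
    (ascPochhammer ℝ (m + 2)).eval (s - (m + 1) / 2) =
      (s ^ 2 - ((m + 1) / 2) ^ 2) * (ascPochhammer ℝ m).eval (s - (m - 1) / 2) := by
  rw [ascPochhammer_succ_eval, ascPochhammer_succ_eval_left,
    show s - ((m : ℝ) + 1) / 2 + 1 = s - (m - 1) / 2 by ring]
  push_cast
  ring

-- Bounding the error at every `t ≥ s` rather than at `s` expresses that it is `O(s ^ (m - 2))`, and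
-- zero for `m < 2`, without negative powers.
theorem exists_sq_mul_pow_sub_eval_ascPochhammer_le (m : ℕ) :
    ∃ D : ℝ, 0 ≤ D ∧ ∀ s : ℝ, ((m : ℝ) - 1) / 2 < s →
      (ascPochhammer ℝ m).eval (s - (m - 1) / 2) ≤ s ^ m ∧
      ∀ t, s ≤ t → t ^ 2 * (s ^ m - (ascPochhammer ℝ m).eval (s - (m - 1) / 2)) ≤ D * t ^ m := by
  induction m using Nat.twoStepInduction with
  | zero => exact ⟨0, le_rfl, fun s _ ↦ by simp⟩
  | one => exact ⟨0, le_rfl, fun s _ ↦ by simp⟩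
  | more m ih _ =>
    obtain ⟨D, hD, ih⟩ := ih
    refine ⟨D + ((m + 1) / 2) ^ 2, by positivity, fun s hs ↦ ?_⟩
    have half_width : (((m + 2 : ℕ) : ℝ) - 1) / 2 = (m + 1) / 2 := by push_cast; ring
    rw [half_width] at hs ⊢
    obtain ⟨le_pow, sq_mul_le⟩ := ih s (by linarith)
    have P_pos := ascPochhammer_pos m (s - ((m : ℝ) - 1) / 2) (by linarith)
    have s_pos : 0 < s := lt_trans (by positivity) hs
    rw [ascPochhammer_add_two_eval_sub_half]
    set P := (ascPochhammer ℝ m).eval (s - ((m : ℝ) - 1) / 2)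
    refine ⟨?_, fun t ht ↦ ?_⟩
    · calc (s ^ 2 - ((m + 1) / 2) ^ 2) * P ≤ s ^ 2 * s ^ m := by gcongr; nlinarith
        _ = s ^ (m + 2) := by ring
    · have : 0 ≤ t := s_pos.le.trans ht
      have P_le : P ≤ t ^ m := le_pow.trans (by gcongr)
      have error_le := sq_mul_le t ht
      have error_nonneg : 0 ≤ t ^ 2 * (s ^ m - P) := mul_nonneg (sq_nonneg t) (sub_nonneg.2 le_pow)
      calc t ^ 2 * (s ^ (m + 2) - (s ^ 2 - ((m + 1) / 2) ^ 2) * P)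
          = s ^ 2 * (t ^ 2 * (s ^ m - P)) + t ^ 2 * ((m + 1) / 2) ^ 2 * P := by ring
        _ ≤ t ^ 2 * (D * t ^ m) + t ^ 2 * ((m + 1) / 2) ^ 2 * t ^ m := by
          have := mul_le_mul (pow_le_pow_left₀ s_pos.le ht 2) error_le error_nonneg (sq_nonneg t)
          gcongr
        _ = (D + ((m + 1) / 2) ^ 2) * t ^ (m + 2) := by ring

theorem exists_abs_multBdiff_sub_mul_sq_le {k : ℕ} (hk : k ≠ 0) :
    ∃ C : ℝ, 0 ≤ C ∧ ∀ (l : ℕ) (μ : ℝ), (k : ℝ) / 2 + l ≤ μ →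
      |(multBdiff (k + 3) l : ℝ) - 2 / k.factorial * ((k : ℝ) / 2 + l) ^ k| * μ ^ 2 ≤
        C * μ ^ k := by
  obtain ⟨m, rfl⟩ := Nat.exists_eq_add_one_of_ne_zero hk
  obtain ⟨D, hD, bound⟩ := exists_sq_mul_pow_sub_eval_ascPochhammer_le m
  refine ⟨2 / (m + 1).factorial * D, by positivity, fun l μ hμ ↦ ?_⟩
  set s := ((m + 1 : ℕ) : ℝ) / 2 + l with hs
  push_cast at hs
  have s_pos : 0 < s := by rw [hs]; positivity
  have : (0 : ℝ) ≤ l := l.cast_nonneg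
  obtain ⟨le_pow, sq_mul_le⟩ := bound s (by linarith)
  rw [show s - ((m : ℝ) - 1) / 2 = l + 1 by rw [hs]; ring] at le_pow sq_mul_le
  have closed_form := factorial_mul_multBdiff_add_four m l
  rw [show (2 * l + (m + 1) : ℝ) = 2 * s by rw [hs]; ring] at closed_form
  set P := (ascPochhammer ℝ m).eval ((l : ℝ) + 1)
  have error_eq : (multBdiff (m + 1 + 3) l : ℝ) - 2 / (m + 1).factorial * s ^ (m + 1) =
      -(2 / (m + 1).factorial * (s * (s ^ m - P))) := by
    field_simp
    linear_combination closed_form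
  have : 0 ≤ s ^ m - P := sub_nonneg.2 le_pow
  have μ_nonneg : 0 ≤ μ := s_pos.le.trans hμ
  rw [error_eq, abs_neg, abs_of_nonneg (by positivity)]
  calc 2 / ((m + 1).factorial : ℝ) * (s * (s ^ m - P)) * μ ^ 2
      = 2 / (m + 1).factorial * (s * (μ ^ 2 * (s ^ m - P))) := by ring
    _ ≤ 2 / (m + 1).factorial * (μ * (D * μ ^ m)) := by
      have := mul_le_mul hμ (sq_mul_le μ hμ) (by positivity) μ_nonneg
      gcongr
    _ = 2 / (m + 1).factorial * D * μ ^ (m + 1) := by ring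

theorem exists_sq_mul_abs_sum_multBdiff_sub_mul_le {k : ℕ} (hk : k ≠ 0) :
    ∃ C : ℝ, ∀ (μ : ℝ) (N : ℕ) (f : ℕ → ℝ), 1 ≤ μ → (k : ℝ) / 2 + N ≤ μ →
      (∀ l ≤ N, |f l| ≤ 1) →
      μ ^ 2 * |∑ l ∈ Finset.range (N + 1),
        ((multBdiff (k + 3) l : ℝ) - 2 / k.factorial * ((k : ℝ) / 2 + l) ^ k) * f l| ≤
          C * μ ^ (k + 1) := by
  obtain ⟨C, hC, weight_le⟩ := exists_abs_multBdiff_sub_mul_sq_le hk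
  refine ⟨2 * C, fun μ N f hμ hN hf ↦ ?_⟩
  set error : ℕ → ℝ := fun l ↦
    (multBdiff (k + 3) l : ℝ) - 2 / k.factorial * ((k : ℝ) / 2 + l) ^ k
  have term_le : ∀ l ∈ Finset.range (N + 1), μ ^ 2 * |error l * f l| ≤ C * μ ^ k := by
    intro l hl
    have l_le : l ≤ N := Finset.mem_range_succ_iff.1 hl
    have l_cast_le : (l : ℝ) ≤ N := by exact_mod_cast l_le
    calc μ ^ 2 * |error l * f l| ≤ μ ^ 2 * (|error l| * 1) := by
          rw [abs_mul]
          gcongr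
          exact hf l l_le
      _ = |error l| * μ ^ 2 := by ring
      _ ≤ C * μ ^ k := weight_le l μ (by linarith)
  have N_le : (N : ℝ) ≤ μ := by linarith [(by positivity : (0 : ℝ) ≤ (k : ℝ) / 2)]
  calc μ ^ 2 * |∑ l ∈ Finset.range (N + 1), error l * f l|
      ≤ μ ^ 2 * ∑ l ∈ Finset.range (N + 1), |error l * f l| := by
        gcongr
        exact Finset.abs_sum_le_sum_abs _ _
    _ ≤ (N + 1) * (C * μ ^ k) := by
      rw [Finset.mul_sum]
      simpa using Finset.sum_le_card_nsmul _ _ _ term_le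
    _ ≤ (2 * μ) * (C * μ ^ k) := by gcongr; linarith
    _ = 2 * C * μ ^ (k + 1) := by ring

theorem sum_multBdiff_three_mul (N : ℕ) (f : ℕ → ℝ) :
    ∑ l ∈ Finset.range (N + 1), (multBdiff 3 l : ℝ) * f l =
      2 * (∑ l ∈ Finset.range (N + 1), f l - f 0 / 2) := by
  have h_zero : multBdiff 3 0 = 1 := multBdiff_add_three_zero 0
  have h_succ (l : ℕ) : multBdiff 3 (l + 1) = 2 := by simp [multBdiff_add_three_succ 0]
  simp only [Finset.sum_range_succ' _ N, h_zero, h_succ, Int.cast_one, Int.cast_ofNat,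
    ← Finset.mul_sum]
  ring

-- Halving the term `l = 0`, as in the trapezoidal rule, costs `O(μ ^ (k + 1))` for `k ≠ 0` and
-- makes the identity exact for `k = 0`.
theorem exists_sq_mul_abs_sum_multBdiff_mul_sub_le (k : ℕ) :
    ∃ C : ℝ, ∀ (μ : ℝ) (N : ℕ) (f : ℕ → ℝ), 1 ≤ μ → (k : ℝ) / 2 + N ≤ μ →
      (∀ l ≤ N, |f l| ≤ 1) →
      μ ^ 2 * |∑ l ∈ Finset.range (N + 1), (multBdiff (k + 3) l : ℝ) * f l -
        2 / k.factorial * (∑ l ∈ Finset.range (N + 1), ((k : ℝ) / 2 + l) ^ k * f l -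
          ((k : ℝ) / 2) ^ k * f 0 / 2)| ≤ C * μ ^ (k + 1) := by
  obtain rfl | hk := eq_or_ne k 0
  · exact ⟨0, fun μ N f _ _ _ ↦ by simp [sum_multBdiff_three_mul]⟩
  obtain ⟨C, sum_le⟩ := exists_sq_mul_abs_sum_multBdiff_sub_mul_le hk
  set c : ℝ := 2 / k.factorial
  have : 0 ≤ c := by positivity
  set a : ℝ := (k : ℝ) / 2
  have : 0 ≤ a := by positivity
  refine ⟨C + c * a ^ k, fun μ N f hμ hN hf ↦ ?_⟩
  have half_le : μ ^ 2 * |c * (a ^ k * f 0 / 2)| ≤ c * a ^ k * μ ^ (k + 1) := by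
    have half_f_le : |f 0 / 2| ≤ 1 := by
      rw [abs_div, abs_two]
      linarith [hf 0 N.zero_le]
    calc μ ^ 2 * |c * (a ^ k * f 0 / 2)| = μ ^ 2 * (c * a ^ k * |f 0 / 2|) := by
          rw [mul_div_assoc, ← mul_assoc, abs_mul, abs_of_nonneg (by positivity)]
      _ ≤ μ ^ (k + 1) * (c * a ^ k * 1) := by
          gcongr
          omega
      _ = c * a ^ k * μ ^ (k + 1) := by ring
  have split : ∑ l ∈ Finset.range (N + 1), (multBdiff (k + 3) l : ℝ) * f l -
      c * (∑ l ∈ Finset.range (N + 1), (a + l) ^ k * f l - a ^ k * f 0 / 2) =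
      ∑ l ∈ Finset.range (N + 1), ((multBdiff (k + 3) l : ℝ) - c * (a + l) ^ k) * f l +
        c * (a ^ k * f 0 / 2) := by
    simp only [sub_mul, Finset.sum_sub_distrib, mul_sub, Finset.mul_sum, mul_assoc]
    ring
  calc _ ≤ μ ^ 2 * (|∑ l ∈ Finset.range (N + 1),
        ((multBdiff (k + 3) l : ℝ) - c * (a + l) ^ k) * f l| + |c * (a ^ k * f 0 / 2)|) := by
        rw [split]
        gcongr
        exact abs_add_le _ _
    _ ≤ (C + c * a ^ k) * μ ^ (k + 1) := by linarith [sum_le μ N f hμ hN hf]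

/-! ### The trapezoidal rule for dilates -/

theorem abs_trapezoidal_error_le_of_hasDerivWithinAt {f f' f'' : ℝ → ℝ} {a b M : ℝ} (hab : a < b)
    (hf : ∀ x ∈ Icc a b, HasDerivWithinAt f (f' x) (Icc a b) x)
    (hf' : ∀ x ∈ Icc a b, HasDerivWithinAt f' (f'' x) (Icc a b) x)
    (hM : ∀ x ∈ Icc a b, |f'' x| ≤ M) {N : ℕ} (hN : 0 < N) :
    |trapezoidal_error f N a b| ≤ (b - a) ^ 3 * M / (12 * N ^ 2) := by
  have uniqueDiff := uniqueDiffOn_Icc hab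
  have derivWithin_eq : EqOn (derivWithin f (Icc a b)) f' (Icc a b) := fun x hx ↦
    (hf x hx).derivWithin (uniqueDiff x hx)
  have hderiv : ∀ x ∈ Icc a b, HasDerivWithinAt (derivWithin f (Icc a b)) (f'' x) (Icc a b) x :=
    fun x hx ↦ (hf' x hx).congr derivWithin_eq (derivWithin_eq hx)
  have second_le (x : ℝ) : |iteratedDerivWithin 2 f (Icc a b) x| ≤ M := by
    rw [iteratedDerivWithin_succ, iteratedDerivWithin_one]
    by_cases hx : x ∈ Icc a b
    · rw [(hderiv x hx).derivWithin (uniqueDiff x hx)]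
      exact hM x hx
    · rw [derivWithin_zero_of_notMem_closure (by rwa [closure_Icc]), abs_zero]
      exact (abs_nonneg _).trans (hM a (left_mem_Icc.2 hab.le))
  rw [← uIcc_of_le hab.le] at hf hderiv second_le
  rw [← abs_of_pos (sub_pos.2 hab)]
  exact trapezoidal_error_le (fun x hx ↦ (hf x hx).differentiableWithinAt)
    (fun x hx ↦ (hderiv x hx).differentiableWithinAt) second_le hN

theorem mul_sum_range_sub_half_ends_eq_trapezoidal_integral (f : ℝ → ℝ) (a h : ℝ) {N : ℕ}
    (hN : 0 < N) :
    h * (∑ l ∈ Finset.range (N + 1), f (a + l * h) - f a / 2 - f (a + N * h) / 2) =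
      trapezoidal_integral f N a (a + N * h) := by
  rw [← sum_trapezoidal_integral_adjacent_intervals hN]
  clear hN
  induction N with
  | zero =>
    simp only [Finset.sum_range_zero, Finset.sum_range_one, zero_add, Nat.cast_zero, zero_mul,
      add_zero]
    ring
  | succ N ih =>
    rw [Finset.sum_range_succ _ N, ← ih, Finset.sum_range_succ _ (N + 1),
      trapezoidal_integral_one]
    push_cast
    ring

theorem abs_mul_sum_range_sub_integral_le {f f' f'' : ℝ → ℝ} {a h M : ℝ} {N : ℕ} (hh : 0 < h)
    (hf : ∀ x ∈ Icc a (a + N * h), HasDerivAt f (f' x) x)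
    (hf' : ∀ x ∈ Icc a (a + N * h), HasDerivAt f' (f'' x) x)
    (hM : ∀ x ∈ Icc a (a + N * h), |f'' x| ≤ M) :
    |h * (∑ l ∈ Finset.range (N + 1), f (a + l * h) - f a / 2 - f (a + N * h) / 2) -
      ∫ x in a..(a + N * h), f x| ≤ N * h ^ 3 * M / 12 := by
  obtain rfl | hN := N.eq_zero_or_pos
  · simp [show f a - f a / 2 - f a / 2 = 0 by ring]
  rw [mul_sum_range_sub_half_ends_eq_trapezoidal_integral f a h hN]
  refine (abs_trapezoidal_error_le_of_hasDerivWithinAt (lt_add_of_pos_right a (by positivity))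
    (fun x hx ↦ (hf x hx).hasDerivWithinAt) (fun x hx ↦ (hf' x hx).hasDerivWithinAt) hM
    hN).trans_eq ?_
  field_simp
  ring

theorem abs_integral_le_sub_pow_succ {f : ℝ → ℝ} {a b : ℝ} {n : ℕ} (hab : a ≤ b)
    (hf : ∀ x ∈ Icc a b, |f x| ≤ (b - x) ^ n) : |∫ x in a..b, f x| ≤ (b - a) ^ (n + 1) := by
  have bound : ∀ x ∈ uIoc a b, ‖f x‖ ≤ (b - a) ^ n := by
    intro x hx
    rw [uIoc_of_le hab] at hx
    have := sub_nonneg.2 hx.2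
    exact (hf x (Ioc_subset_Icc_self hx)).trans (by gcongr; exact hx.1.le)
  simpa only [Real.norm_eq_abs, abs_of_nonneg (sub_nonneg.2 hab), pow_succ] using
    intervalIntegral.norm_integral_le_of_norm_le_const bound

theorem abs_sum_dilate_sub_integral_le {f f' f'' : ℝ → ℝ} {a μ M : ℝ} {N : ℕ} (hμ : 0 < μ)
    (hN : N ≤ μ) (hf : ∀ x ∈ Icc (a / μ) ((a + N) / μ), HasDerivAt f (f' x) x)
    (hf' : ∀ x ∈ Icc (a / μ) ((a + N) / μ), HasDerivAt f' (f'' x) x)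
    (hM : ∀ x ∈ Icc (a / μ) ((a + N) / μ), |f'' x| ≤ M) :
    |∑ l ∈ Finset.range (N + 1), f ((a + l) / μ) - f (a / μ) / 2 - f ((a + N) / μ) / 2 -
      μ * ∫ x in (a / μ)..((a + N) / μ), f x| ≤ M / μ := by
  have grid (l : ℕ) : (a + l) / μ = a / μ + l * μ⁻¹ := by ring
  simp only [grid] at hf hf' hM ⊢
  have M_nonneg : 0 ≤ M :=
    (abs_nonneg _).trans (hM (a / μ) (left_mem_Icc.2 (le_add_of_nonneg_right (by positivity))))
  have trapezoid := abs_mul_sum_range_sub_integral_le (inv_pos.2 hμ) hf hf' hM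
  set T := ∑ l ∈ Finset.range (N + 1), f (a / μ + l * μ⁻¹) - f (a / μ) / 2 -
    f (a / μ + N * μ⁻¹) / 2
  set I := ∫ x in (a / μ)..(a / μ + N * μ⁻¹), f x
  calc |T - μ * I| = μ * |μ⁻¹ * T - I| := by
        rw [← abs_of_pos hμ, ← abs_mul, abs_of_pos hμ, mul_sub, mul_inv_cancel_left₀ hμ.ne']
    _ ≤ μ * (μ * μ⁻¹ ^ 3 * M / 1) := by
      gcongr
      refine trapezoid.trans ?_
      gcongr
      norm_num
    _ = M / μ := by field_simp

theorem abs_half_sub_mul_integral_le {f : ℝ → ℝ} {b δ μ : ℝ} (hμ : 1 ≤ μ) (hb : b ≤ 1)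
    (hδ : 1 - b ≤ δ / μ) (hf : ∀ x ∈ Icc b 1, |f x| ≤ (1 - x) ^ 2) :
    |f b / 2 - μ * ∫ x in b..1, f x| ≤ (δ ^ 2 + δ ^ 3) / μ := by
  have one_sub_nonneg : 0 ≤ 1 - b := sub_nonneg.2 hb
  have δ_nonneg : 0 ≤ δ := by
    simpa only [zero_mul] using (le_div_iff₀ (by positivity)).1 (one_sub_nonneg.trans hδ)
  have last_le : |f b / 2| ≤ (1 - b) ^ 2 := by
    rw [abs_div, abs_two]
    linarith [abs_nonneg (f b), hf b (left_mem_Icc.2 hb)]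
  have tail_le : |μ * ∫ x in b..1, f x| ≤ μ * (1 - b) ^ 3 := by
    rw [abs_mul, abs_of_nonneg (by positivity)]
    gcongr
    exact abs_integral_le_sub_pow_succ hb hf
  calc |f b / 2 - μ * ∫ x in b..1, f x| ≤ (1 - b) ^ 2 + μ * (1 - b) ^ 3 :=
        (abs_sub _ _).trans (add_le_add last_le tail_le)
    _ ≤ (δ / μ) ^ 2 + μ * (δ / μ) ^ 3 := by gcongr
    _ = (δ ^ 2 + δ ^ 3) / μ ^ 2 := by field_simp
    _ ≤ (δ ^ 2 + δ ^ 3) / μ := by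
      gcongr
      exact le_self_pow₀ hμ two_ne_zero

theorem exists_abs_sum_dilate_sub_integral_le {f f' f'' : ℝ → ℝ}
    (hf : ∀ x ∈ Ico (0 : ℝ) 1, HasDerivAt f (f' x) x)
    (hf' : ∀ x ∈ Ico (0 : ℝ) 1, HasDerivAt f' (f'' x) x)
    (hf_cont : ContinuousOn f (Icc 0 1)) (hf''_cont : ContinuousOn f'' (Icc 0 1))
    (hf_end : ∀ x ∈ Icc (0 : ℝ) 1, |f x| ≤ (1 - x) ^ 2) (δ : ℝ) :
    ∃ C : ℝ, ∀ (μ a : ℝ) (N : ℕ), 1 ≤ μ → 0 ≤ a → a + N < μ → μ ≤ a + N + δ →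
      |∑ l ∈ Finset.range (N + 1), f ((a + l) / μ) - f (a / μ) / 2 - μ * ∫ x in (a / μ)..1, f x| ≤
        C / μ := by
  obtain ⟨M, hM⟩ := isCompact_Icc.exists_bound_of_continuousOn hf''_cont
  refine ⟨M + (δ ^ 2 + δ ^ 3), fun μ a N hμ ha hN hδ ↦ ?_⟩
  have μ_pos : 0 < μ := by positivity
  have trapezoid := abs_sum_dilate_sub_integral_le (f := f) (f' := f') (f'' := f'') (a := a)
    (M := M) (N := N) μ_pos (by linarith)
  set b := (a + N) / μ with hb
  have left_nonneg : 0 ≤ a / μ := by positivity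
  have left_le : a / μ ≤ b := by rw [hb]; gcongr; simp
  have b_lt : b < 1 := (div_lt_one μ_pos).2 hN
  have mem {x : ℝ} (hx : x ∈ Icc (a / μ) b) : x ∈ Ico (0 : ℝ) 1 :=
    ⟨left_nonneg.trans hx.1, hx.2.trans_lt b_lt⟩
  specialize trapezoid (fun x hx ↦ hf x (mem hx)) (fun x hx ↦ hf' x (mem hx))
    fun x hx ↦ hM x (Ico_subset_Icc_self (mem hx))
  have one_sub_b_le : 1 - b ≤ δ / μ := by
    rw [hb, one_sub_div μ_pos.ne']
    gcongr
    linarith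
  have end_le := abs_half_sub_mul_integral_le hμ b_lt.le one_sub_b_le fun x hx ↦
    hf_end x ⟨(left_nonneg.trans left_le).trans hx.1, hx.2⟩
  have integrable {x y : ℝ} (hx : 0 ≤ x) (hxy : x ≤ y) (hy : y ≤ 1) :
      IntervalIntegrable f volume x y :=
    (hf_cont.mono (Icc_subset_Icc hx hy)).intervalIntegrable_of_Icc hxy
  rw [← intervalIntegral.integral_add_adjacent_intervals
    (integrable left_nonneg left_le b_lt.le)
    (integrable (left_nonneg.trans left_le) b_lt.le le_rfl), add_div]
  rw [abs_le] at *
  constructor <;> linarith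

/-! ### The profile `g` and its moments -/

theorem continuous_gfun : Continuous gfun := by
  unfold gfun
  fun_prop

theorem hasDerivAt_gfun {x : ℝ} (hx : x ∈ Ioo (-1 : ℝ) 1) :
    HasDerivAt gfun (-(arccos x / π)) x := by
  have one_sub_sq_pos : 0 < 1 - x ^ 2 := by nlinarith [hx.1, hx.2]
  have hsqrt : HasDerivAt (fun y : ℝ ↦ √(1 - y ^ 2)) (-(2 * x) / (2 * √(1 - x ^ 2))) x := by
    simpa using ((hasDerivAt_pow 2 x).const_sub 1).sqrt one_sub_sq_pos.ne'
  refine ((hsqrt.sub ((hasDerivAt_id x).mul (hasDerivAt_arccos hx.1.ne' hx.2.ne))).div_const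
    π).congr_deriv ?_
  have := (sqrt_pos.2 one_sub_sq_pos).ne'
  simp only [id]
  field_simp
  ring

theorem abs_arccos_div_pi_le_one (x : ℝ) : |arccos x / π| ≤ 1 := by
  rw [abs_of_nonneg (div_nonneg (arccos_nonneg x) pi_pos.le)]
  exact (div_le_one pi_pos).2 (arccos_le_pi x)

theorem gfun_eq_integral_arccos {x : ℝ} (hx : x ∈ Icc (-1 : ℝ) 1) :
    gfun x = ∫ t in x..1, arccos t / π := by
  have ftc : ∫ t in x..1, -(arccos t / π) = gfun 1 - gfun x :=
    intervalIntegral.integral_eq_sub_of_hasDerivAt_of_le hx.2 continuous_gfun.continuousOn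
      (fun t ht ↦ hasDerivAt_gfun ⟨hx.1.trans_lt ht.1, ht.2⟩)
      (Continuous.intervalIntegrable (by fun_prop) _ _)
  have gfun_one : gfun 1 = 0 := by simp [gfun]
  rw [intervalIntegral.integral_neg, gfun_one] at ftc
  linarith

theorem abs_gfun_le {x : ℝ} (hx : x ∈ Icc (-1 : ℝ) 1) : |gfun x| ≤ 1 - x := by
  rw [gfun_eq_integral_arccos hx]
  simpa only [zero_add, pow_one] using abs_integral_le_sub_pow_succ (n := 0) hx.2 fun t _ ↦ by
    simpa only [pow_zero] using abs_arccos_div_pi_le_one t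

/-- The area `∫ₓ¹ g` under the graph of `g` to the right of `x`. -/
noncomputable def gTail (x : ℝ) : ℝ := ∫ t in x..1, gfun t

theorem hasDerivAt_gTail (x : ℝ) : HasDerivAt gTail (-gfun x) x :=
  intervalIntegral.integral_hasDerivAt_left (continuous_gfun.intervalIntegrable _ _)
    (continuous_gfun.stronglyMeasurableAtFilter _ _) continuous_gfun.continuousAt

theorem continuous_gTail : Continuous gTail :=
  continuous_iff_continuousAt.2 fun x ↦ (hasDerivAt_gTail x).continuousAt

theorem abs_gTail_le {x : ℝ} (hx : x ∈ Icc (-1 : ℝ) 1) : |gTail x| ≤ (1 - x) ^ 2 :=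
  abs_integral_le_sub_pow_succ hx.2 fun t ht ↦ by
    simpa using abs_gfun_le ⟨hx.1.trans ht.1, ht.2⟩

theorem abs_gTail_le_one {x : ℝ} (hx : x ∈ Icc (0 : ℝ) 1) : |gTail x| ≤ 1 :=
  (abs_gTail_le ⟨by linarith [hx.1], hx.2⟩).trans
    (pow_le_one₀ (by linarith [hx.2]) (by linarith [hx.1]))

theorem integral_mul_gfun_div {μ : ℝ} (hμ : μ ≠ 0) (s : ℝ) :
    ∫ t in s..μ, μ * gfun (t / μ) = μ ^ 2 * gTail (s / μ) := by
  rw [intervalIntegral.integral_const_mul, intervalIntegral.integral_comp_div gfun hμ,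
    div_self hμ, smul_eq_mul, gTail]
  ring

theorem integral_pow_mul_eq_of_hasDerivAt {f f' : ℝ → ℝ} (k : ℕ) (hf : ContinuousOn f (Icc 0 1))
    (hderiv : ∀ x ∈ Ioo (0 : ℝ) 1, HasDerivAt f (-f' x) x)
    (hf' : IntervalIntegrable f' volume 0 1) (hf_one : f 1 = 0) :
    ∫ x in (0 : ℝ)..1, x ^ k * f x = (∫ x in (0 : ℝ)..1, x ^ (k + 1) * f' x) / (k + 1) := by
  have parts := intervalIntegral.integral_mul_deriv_eq_deriv_mul_of_hasDerivAt
    (a := 0) (b := 1) (u := f) (u' := fun x ↦ -f' x) (v := fun x ↦ x ^ (k + 1) / ((k : ℝ) + 1))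
    (v' := fun x ↦ x ^ k) (by rwa [uIcc_of_le zero_le_one]) (by fun_prop)
    (by simpa using hderiv)
    (fun x _ ↦ by
      refine ((hasDerivAt_pow (k + 1) x).div_const ((k : ℝ) + 1)).congr_deriv ?_
      push_cast
      field_simp)
    hf'.neg (Continuous.intervalIntegrable (by fun_prop) _ _)
  simp only [hf_one, zero_mul, zero_pow k.succ_ne_zero, zero_div, mul_zero, sub_zero, neg_mul,
    intervalIntegral.integral_neg, zero_sub, neg_neg] at parts
  rw [← intervalIntegral.integral_div]
  calc ∫ x in (0 : ℝ)..1, x ^ k * f x = ∫ x in (0 : ℝ)..1, f x * x ^ k := by simp only [mul_comm]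
    _ = ∫ x in (0 : ℝ)..1, f' x * (x ^ (k + 1) / (k + 1)) := parts
    _ = ∫ x in (0 : ℝ)..1, x ^ (k + 1) * f' x / (k + 1) := by
      congr 1 with x
      ring

theorem integral_mul_cos_pow_mul_sin (k : ℕ) :
    ∫ θ in (0 : ℝ)..(π / 2), θ * (cos θ ^ k * sin θ) =
      (∫ θ in (0 : ℝ)..(π / 2), cos θ ^ (k + 1)) / (k + 1) := by
  have parts := intervalIntegral.integral_mul_deriv_eq_deriv_mul
    (a := 0) (b := π / 2) (u := fun θ ↦ θ) (u' := fun _ ↦ 1)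
    (v := fun θ ↦ -(cos θ ^ (k + 1) / ((k : ℝ) + 1))) (v' := fun θ ↦ cos θ ^ k * sin θ)
    (fun θ _ ↦ hasDerivAt_id θ)
    (fun θ _ ↦ by
      refine (((hasDerivAt_cos θ).pow (k + 1)).div_const ((k : ℝ) + 1)).neg.congr_deriv ?_
      push_cast
      field_simp)
    (by simp) (Continuous.intervalIntegrable (by fun_prop) _ _)
  rw [parts]
  simp

theorem integral_pow_mul_arccos (k : ℕ) :
    ∫ x in (0 : ℝ)..1, x ^ k * arccos x =
      (∫ θ in (0 : ℝ)..(π / 2), cos θ ^ (k + 1)) / (k + 1) := by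
  have subst := intervalIntegral.integral_comp_mul_deriv (a := π / 2) (b := 0) (f := cos)
    (f' := fun θ ↦ -sin θ) (g := fun x ↦ x ^ k * arccos x)
    (fun θ _ ↦ hasDerivAt_cos θ) (by fun_prop) (by fun_prop)
  rw [cos_pi_div_two, cos_zero] at subst
  rw [← subst, intervalIntegral.integral_symm, ← intervalIntegral.integral_neg,
    ← integral_mul_cos_pow_mul_sin]
  refine intervalIntegral.integral_congr fun θ hθ ↦ ?_
  rw [uIcc_of_le (by positivity)] at hθ
  simp only [Function.comp, arccos_cos hθ.1 (by linarith [hθ.2, pi_pos])]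
  ring

theorem integral_cos_pow_zero_pi_div_two (n : ℕ) :
    ∫ θ in (0 : ℝ)..(π / 2), cos θ ^ n =
      π * n.factorial / (2 ^ (n + 1) * Gamma ((n : ℝ) / 2 + 1) ^ 2) := by
  induction n using Nat.twoStepInduction with
  | zero => simp
  | one =>
    have Gamma_three_halves : Gamma ((1 : ℝ) / 2 + 1) = 1 / 2 * √π := by
      rw [Gamma_add_one (by norm_num), Gamma_one_half_eq]
    simp only [pow_one, integral_cos, Nat.cast_one, Gamma_three_halves, mul_pow,
      sq_sqrt pi_pos.le]
    simp
  | more n ih _ =>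
    have Gamma_step : Gamma (((n + 2 : ℕ) : ℝ) / 2 + 1) =
        ((n : ℝ) / 2 + 1) * Gamma ((n : ℝ) / 2 + 1) := by
      rw [← Gamma_add_one (by positivity)]
      congr 1
      push_cast
      ring
    have : Gamma ((n : ℝ) / 2 + 1) ≠ 0 := (Gamma_pos_of_pos (by positivity)).ne'
    rw [integral_cos_pow, ih, Gamma_step, Nat.factorial_succ, Nat.factorial_succ, cos_pi_div_two,
      sin_zero, zero_pow n.succ_ne_zero]
    push_cast
    field_simp
    ring

theorem two_div_factorial_mul_integral_pow_mul_gTail (k : ℕ) :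
    2 / k.factorial * ∫ x in (0 : ℝ)..1, x ^ k * gTail x =
      1 / (2 ^ (k + 3) * Gamma (((k + 3 : ℕ) : ℝ) / 2 + 1) ^ 2) := by
  rw [integral_pow_mul_eq_of_hasDerivAt k continuous_gTail.continuousOn
      (fun x _ ↦ hasDerivAt_gTail x) (continuous_gfun.intervalIntegrable _ _) (by simp [gTail]),
    integral_pow_mul_eq_of_hasDerivAt (k + 1) continuous_gfun.continuousOn
      (fun x hx ↦ hasDerivAt_gfun ⟨by linarith [hx.1], hx.2⟩)
      (Continuous.intervalIntegrable (by fun_prop) _ _) (by simp [gfun])]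
  simp_rw [← mul_div_assoc]
  rw [intervalIntegral.integral_div, integral_pow_mul_arccos, integral_cos_pow_zero_pi_div_two,
    show k + 1 + 1 + 1 = k + 3 from rfl]
  have : Gamma (((k + 3 : ℕ) : ℝ) / 2 + 1) ≠ 0 := (Gamma_pos_of_pos (by positivity)).ne'
  generalize Gamma (((k + 3 : ℕ) : ℝ) / 2 + 1) = G at *
  push_cast [Nat.factorial_succ]
  field_simp
  ring

/-! ### The weighted sum -/

theorem exists_abs_sum_pow_mul_gTail_sub_integral_left_le (k : ℕ) (δ : ℝ) :
    ∃ C : ℝ, ∀ (μ a : ℝ) (N : ℕ), 1 ≤ μ → 0 ≤ a → a + N < μ → μ ≤ a + N + δ →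
      |∑ l ∈ Finset.range (N + 1), ((a + l) / μ) ^ k * gTail ((a + l) / μ) -
        (a / μ) ^ k * gTail (a / μ) / 2 - μ * ∫ x in (a / μ)..1, x ^ k * gTail x| ≤ C / μ := by
  have := continuous_gTail
  have := continuous_gfun
  refine exists_abs_sum_dilate_sub_integral_le (f := fun x ↦ x ^ k * gTail x)
    (fun x _ ↦ (hasDerivAt_pow k x).mul (hasDerivAt_gTail x))
    (fun x hx ↦ (((hasDerivAt_pow (k - 1) x).const_mul (k : ℝ)).mul (hasDerivAt_gTail x)).add
      ((hasDerivAt_pow k x).mul (hasDerivAt_gfun ⟨by linarith [hx.1], hx.2⟩).neg))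
    (by fun_prop) (by fun_prop) (fun x hx ↦ ?_) δ
  rw [abs_mul, abs_of_nonneg (pow_nonneg hx.1 k)]
  exact (mul_le_of_le_one_left (abs_nonneg _) (pow_le_one₀ hx.1 hx.2)).trans
    (abs_gTail_le ⟨by linarith [hx.1], hx.2⟩)

theorem abs_mul_integral_pow_mul_gTail_le (k : ℕ) {μ : ℝ} (hμ : 1 ≤ μ) (hkμ : (k : ℝ) / 2 ≤ μ) :
    |μ * ∫ x in (0 : ℝ)..(k / 2 / μ), x ^ k * gTail x| ≤ ((k : ℝ) / 2) ^ (k + 1) / μ := by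
  obtain rfl | hk := eq_or_ne k 0
  · simp
  have μ_pos : 0 < μ := by positivity
  set a : ℝ := (k : ℝ) / 2
  have : 0 ≤ a := by positivity
  have bound : ∀ x ∈ uIoc 0 (a / μ), ‖x ^ k * gTail x‖ ≤ (a / μ) ^ k := by
    intro x hx
    rw [uIoc_of_le (by positivity)] at hx
    have x_nonneg : 0 ≤ x := hx.1.le
    have x_le_one : x ≤ 1 := hx.2.trans ((div_le_one μ_pos).2 hkμ)
    rw [norm_mul, norm_pow, Real.norm_of_nonneg x_nonneg]
    exact (mul_le_of_le_one_right (by positivity) (abs_gTail_le_one ⟨x_nonneg, x_le_one⟩)).trans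
      (by gcongr; exact hx.2)
  have integral_le := intervalIntegral.norm_integral_le_of_norm_le_const bound
  rw [sub_zero, abs_of_nonneg (by positivity), Real.norm_eq_abs] at integral_le
  calc |μ * ∫ x in (0 : ℝ)..(a / μ), x ^ k * gTail x| ≤ μ * ((a / μ) ^ k * (a / μ)) := by
        rw [abs_mul, abs_of_pos μ_pos]
        gcongr
    _ = a ^ (k + 1) / μ ^ k := by rw [div_pow]; field_simp; ring
    _ ≤ a ^ (k + 1) / μ := by
      gcongr
      exact le_self_pow₀ hμ hk

theorem exists_abs_sum_pow_mul_gTail_sub_integral_le (k : ℕ) (δ : ℝ) :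
    ∃ C : ℝ, ∀ (μ : ℝ) (N : ℕ), 1 ≤ μ → (k : ℝ) / 2 + N < μ → μ ≤ (k : ℝ) / 2 + N + δ →
      |∑ l ∈ Finset.range (N + 1), (((k : ℝ) / 2 + l) / μ) ^ k * gTail (((k : ℝ) / 2 + l) / μ) -
        ((k : ℝ) / 2 / μ) ^ k * gTail ((k : ℝ) / 2 / μ) / 2 -
          μ * ∫ x in (0 : ℝ)..1, x ^ k * gTail x| ≤ C / μ := by
  obtain ⟨C, right_le⟩ := exists_abs_sum_pow_mul_gTail_sub_integral_left_le k δ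
  refine ⟨C + ((k : ℝ) / 2) ^ (k + 1), fun μ N hμ hN hδ ↦ ?_⟩
  have left_le := abs_mul_integral_pow_mul_gTail_le k hμ (by linarith [N.cast_nonneg (α := ℝ)])
  have integrable (x y : ℝ) : IntervalIntegrable (fun x ↦ x ^ k * gTail x) volume x y :=
    ((continuous_pow k).mul continuous_gTail).intervalIntegrable x y
  specialize right_le μ (k / 2) N hμ (by positivity) hN hδ
  rw [← intervalIntegral.integral_add_adjacent_intervals (integrable 0 (k / 2 / μ))
    (integrable _ 1), add_div]
  rw [abs_le] at *
  constructor <;> linarith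

theorem exists_sq_mul_abs_sum_pow_mul_gTail_sub_integral_le (k : ℕ) (δ : ℝ) :
    ∃ C : ℝ, ∀ (μ : ℝ) (N : ℕ), 1 ≤ μ → (k : ℝ) / 2 + N < μ → μ ≤ (k : ℝ) / 2 + N + δ →
      μ ^ 2 * |∑ l ∈ Finset.range (N + 1), ((k : ℝ) / 2 + l) ^ k * gTail (((k : ℝ) / 2 + l) / μ) -
        ((k : ℝ) / 2) ^ k * gTail ((k : ℝ) / 2 / μ) / 2 -
          μ ^ (k + 1) * ∫ x in (0 : ℝ)..1, x ^ k * gTail x| ≤ C * μ ^ (k + 1) := by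
  obtain ⟨C, riemann_le⟩ := exists_abs_sum_pow_mul_gTail_sub_integral_le k δ
  refine ⟨C, fun μ N hμ hN hδ ↦ ?_⟩
  have μ_pos : 0 < μ := by positivity
  specialize riemann_le μ N hμ hN hδ
  simp only [div_pow _ μ, div_mul_eq_mul_div _ (μ ^ k), ← Finset.sum_div] at riemann_le
  set S := ∑ l ∈ Finset.range (N + 1), ((k : ℝ) / 2 + l) ^ k * gTail (((k : ℝ) / 2 + l) / μ)
  set I := ∫ x in (0 : ℝ)..1, x ^ k * gTail x
  set H := ((k : ℝ) / 2) ^ k * gTail ((k : ℝ) / 2 / μ)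
  calc μ ^ 2 * |S - H / 2 - μ ^ (k + 1) * I|
      = μ ^ 2 * (μ ^ k * |S / μ ^ k - H / μ ^ k / 2 - μ * I|) := by
        rw [← abs_of_pos (pow_pos μ_pos k), ← abs_mul, abs_of_pos (pow_pos μ_pos k)]
        congr 2
        field_simp
        ring
    _ ≤ μ ^ 2 * (μ ^ k * (C / μ)) := by gcongr
    _ = C * μ ^ (k + 1) := by field_simp; ring

theorem exists_abs_sum_multBdiff_mul_gTail_sub_le (k : ℕ) (δ : ℝ) :
    ∃ C : ℝ, ∀ (μ : ℝ) (N : ℕ), 1 ≤ μ → (k : ℝ) / 2 + N < μ → μ ≤ (k : ℝ) / 2 + N + δ →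
      |∑ l ∈ Finset.range (N + 1),
          (multBdiff (k + 3) l : ℝ) * (μ ^ 2 * gTail (((k : ℝ) / 2 + l) / μ)) -
        μ ^ (k + 3) / (2 ^ (k + 3) * Gamma (((k + 3 : ℕ) : ℝ) / 2 + 1) ^ 2)| ≤
          C * μ ^ (k + 1) := by
  obtain ⟨C₁, weights_le⟩ := exists_sq_mul_abs_sum_multBdiff_mul_sub_le k
  obtain ⟨C₂, riemann_le⟩ := exists_sq_mul_abs_sum_pow_mul_gTail_sub_integral_le k δ
  set c : ℝ := 2 / k.factorial with hc
  have c_nonneg : 0 ≤ c := by positivity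
  refine ⟨C₁ + c * C₂, fun μ N hμ hN hδ ↦ ?_⟩
  have μ_pos : 0 < μ := by positivity
  specialize weights_le μ N (fun l ↦ gTail ((k / 2 + l) / μ)) hμ hN.le fun l hl ↦
    abs_gTail_le_one ⟨by positivity, (div_le_one μ_pos).2 (le_trans (by gcongr) hN.le)⟩
  specialize riemann_le μ N hμ hN hδ
  simp only [Nat.cast_zero, add_zero] at weights_le
  simp only [mul_left_comm _ (μ ^ 2), ← Finset.mul_sum]
  rw [← mul_one_div (μ ^ (k + 3)), ← two_div_factorial_mul_integral_pow_mul_gTail, ← hc]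
  set S := ∑ l ∈ Finset.range (N + 1), (multBdiff (k + 3) l : ℝ) * gTail ((k / 2 + l) / μ)
  set T := ∑ l ∈ Finset.range (N + 1), ((k : ℝ) / 2 + l) ^ k * gTail ((k / 2 + l) / μ) -
    ((k : ℝ) / 2) ^ k * gTail (k / 2 / μ) / 2
  set I := ∫ x in (0 : ℝ)..1, x ^ k * gTail x
  calc |μ ^ 2 * S - μ ^ (k + 3) * (c * I)|
      = |μ ^ 2 * (S - c * T) + c * (μ ^ 2 * (T - μ ^ (k + 1) * I))| := by ring_nf
    _ ≤ μ ^ 2 * |S - c * T| + c * (μ ^ 2 * |T - μ ^ (k + 1) * I|) := by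
      refine (abs_add_le _ _).trans_eq ?_
      rw [abs_mul, abs_mul c, abs_mul, abs_of_pos (pow_pos μ_pos 2), abs_of_nonneg c_nonneg]
    _ ≤ C₁ * μ ^ (k + 1) + c * (C₂ * μ ^ (k + 1)) := by gcongr
    _ = (C₁ + c * C₂) * μ ^ (k + 1) := by ring

theorem exists_abs_tsum_multBdiff_mul_gTail_sub_le (k : ℕ) :
    ∃ C : ℝ, ∀ μ : ℝ, 1 ≤ μ →
      |(∑' l : ℕ, if (l : ℝ) ≤ μ - (k + 1) / 2 then
          (multBdiff (k + 3) l : ℝ) * (μ ^ 2 * gTail (((k : ℝ) / 2 + l) / μ)) else 0) -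
        μ ^ (k + 3) / (2 ^ (k + 3) * Gamma (((k + 3 : ℕ) : ℝ) / 2 + 1) ^ 2)| ≤
          C * μ ^ (k + 1) := by
  obtain ⟨C, bound⟩ := exists_abs_sum_multBdiff_mul_gTail_sub_le k (3 / 2)
  set K : ℝ := 2 ^ (k + 3) * Gamma (((k + 3 : ℕ) : ℝ) / 2 + 1) ^ 2
  refine ⟨max C ((k + 1) ^ 2 / K), fun μ hμ ↦ ?_⟩
  obtain hμk | hμk := le_or_gt 0 (μ - ((k : ℝ) + 1) / 2)
  · rw [tsum_ite_natCast_le_eq_sum_range_floor hμk]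
    have floor_le := Nat.floor_le hμk
    have lt_floor_add_one := Nat.lt_floor_add_one (μ - ((k : ℝ) + 1) / 2)
    refine (bound μ _ hμ (by linarith) (by linarith)).trans ?_
    gcongr
    exact le_max_left _ _
  · have no_terms (l : ℕ) : ¬(l : ℝ) ≤ μ - (k + 1) / 2 := by
      linarith [l.cast_nonneg (α := ℝ)]
    simp only [no_terms, if_false, tsum_zero, zero_sub, abs_neg]
    calc |μ ^ (k + 3) / K| = μ ^ 2 / K * μ ^ (k + 1) := by
          rw [abs_of_nonneg (by positivity)]
          ring
      _ ≤ (k + 1) ^ 2 / K * μ ^ (k + 1) := by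
          gcongr
          linarith
      _ ≤ max C ((k + 1) ^ 2 / K) * μ ^ (k + 1) := by
          gcongr
          exact le_max_right _ _

/-- the weighted sum of areas gives the main Weyl term up to `O(μ^{d-2})`. -/
theorem weighted_area_sum_asymptotics (d : ℕ) (hd : 3 ≤ d) :
    ∃ C : ℝ, 0 < C ∧ ∀ μ : ℝ, 2 ≤ μ →
      |(∑' l : ℕ, if (l : ℝ) ≤ μ - ((d : ℝ) - 2) / 2 then
            (multBdiff d l : ℝ) * ∫ t in ((l : ℝ) + ((d : ℝ) - 3) / 2)..μ, μ * gfun (t / μ)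
          else 0) -
          μ ^ d / (2 ^ d * Real.Gamma ((d : ℝ) / 2 + 1) ^ 2)| ≤ C * μ ^ (d - 2) := by
  obtain ⟨k, rfl⟩ := Nat.exists_eq_add_of_le' hd
  obtain ⟨C, bound⟩ := exists_abs_tsum_multBdiff_mul_gTail_sub_le k
  refine ⟨max C 1, by positivity, fun μ hμ ↦ ?_⟩
  have cutoff : μ - (((k + 3 : ℕ) : ℝ) - 2) / 2 = μ - (k + 1) / 2 := by push_cast; ring
  have node (l : ℕ) : (l : ℝ) + (((k + 3 : ℕ) : ℝ) - 3) / 2 = k / 2 + l := by push_cast; ring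
  simp only [cutoff, node, integral_mul_gfun_div (by positivity : μ ≠ 0)]
  refine (bound μ (by linarith)).trans ?_
  rw [show k + 3 - 2 = k + 1 from rfl]
  gcongr
  exact le_max_left _ _
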